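/- Only a tiny proportion of pairs have separation exceeding √2·a: the volume of the set {(A,B) ∈ C × C : dist(A,B) > √2·a} is strictly less than 0.0005·a⁶ (about 0.04% of all pairs). -/

import Mathlib

open MeasureTheory Real Set

/-- The cube `[0,a]³` in Euclidean 3-space. -/
def cube (a : ℝ) : Set (EuclideanSpace ℝ (Fin 3)) := {x | ∀ i, x i ∈ Set.Icc 0 a}

noncomputable def QQ (t : ℝ) : ℝ := t^2/4 + t^3/8 + 5/64*t^4 + 35/64*t^5
noncomputable def HH (s : ℝ) : ℝ := s^4/96 + s^5/160 + 3/200*s^6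

lemma int_bound (r : ℝ) (h1 : r ≤ 1) (f W : ℝ → ℝ) (hf : Continuous f)
    (hW : ∀ y, HasDerivAt W (f y) y) (hpos : ∀ y ∈ Icc r 1, 0 ≤ f y)
    (g : ℝ → ENNReal) (hg1 : ∀ y ∈ Icc (0:ℝ) 1, r < y → g y ≤ ENNReal.ofReal (f y))
    (hg0 : ∀ y ∈ Icc (0:ℝ) 1, y ≤ r → g y = 0) :
    ∫⁻ y in Icc (0:ℝ) 1, g y ≤ ENNReal.ofReal (W 1 - W r) := by
  have e : ENNReal.ofReal (W 1 - W r) = ∫⁻ y in Ioc r 1, ENNReal.ofReal (f y) := by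
    rw [← intervalIntegral.integral_eq_sub_of_hasDerivAt (fun y _ => hW y)
      (hf.intervalIntegrable _ _), intervalIntegral.integral_of_le h1]
    apply ofReal_integral_eq_lintegral_ofReal
    · exact (hf.integrableOn_Icc (a := r) (b := 1)).mono_set Ioc_subset_Icc_self
    · exact (ae_restrict_iff' measurableSet_Ioc).2 (.of_forall fun y hy =>
        hpos y (Ioc_subset_Icc_self hy))
  rw [e, ← lintegral_indicator measurableSet_Ioc, ← lintegral_indicator measurableSet_Icc]
  apply lintegral_mono
  intro y
  by_cases hy : y ∈ Icc (0:ℝ) 1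
  · by_cases h : r < y
    · simp only [indicator_of_mem hy]
      have hm : y ∈ Ioc r 1 := ⟨h, hy.2⟩
      rw [indicator_of_mem hm]
      exact hg1 y hy h
    · simp [indicator_of_mem hy, hg0 y hy (not_lt.1 h)]
  · simp [indicator_of_notMem hy]

lemma QQ_ge (r : ℝ) (h0 : 0 ≤ r) (h1 : r ≤ 1) : (1-r)^2 ≤ QQ (1-r^2) := by
  have h : 0 ≤ (1-r)^5*(2*r+325/64*r^2+345/64*r^3+175/64*r^4+35/64*r^5) := by
    have : 0 ≤ 1 - r := by linarith
    positivity
  rw [← sub_nonneg]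
  refine h.trans (le_of_eq ?_)
  unfold QQ; ring

lemma L1 (x y : ℝ) (hx : x ∈ Icc (0:ℝ) 1) (hy : y ∈ Icc (0:ℝ) 1) :
    ∫⁻ z in Icc (0:ℝ) 1, ENNReal.ofReal (2*(1-z)) * (if 2 < x^2+y^2+z^2 then 1 else 0) ≤
      ENNReal.ofReal (QQ (max 0 (x^2+y^2-1))) := by
  have key : ∀ r : ℝ, 0 ≤ r → r ≤ 1 →
      (∀ z ∈ Icc (0:ℝ) 1, z ≤ r → ¬ 2 < x^2+y^2+z^2) →
      ∫⁻ z in Icc (0:ℝ) 1, ENNReal.ofReal (2*(1-z)) * (if 2 < x^2+y^2+z^2 then 1 else 0) ≤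
      ENNReal.ofReal ((1-r)^2) := by
    intro r h0 h1 h
    have := int_bound r h1 (fun z => 2*(1-z)) (fun z => -(1-z)^2) (by fun_prop)
      (fun z => by
        have := (((hasDerivAt_id z).const_sub 1).pow 2).neg
        refine this.congr_deriv ?_; simp)
      (fun z hz => by have := hz.2; simp; linarith)
      (fun z => ENNReal.ofReal (2*(1-z)) * (if 2 < x^2+y^2+z^2 then 1 else 0))
      (fun z _ _ => by split_ifs <;> simp)
      (fun z hz hr => by simp [h z hz hr])
    simpa using this
  have hx2 : x^2 ≤ 1 := by nlinarith [hx.1, hx.2]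
  have hy2 : y^2 ≤ 1 := by nlinarith [hy.1, hy.2]
  by_cases ht : x^2+y^2 ≤ 1
  · have := key 1 zero_le_one le_rfl (fun z hz _ => by nlinarith [hz.1, hz.2])
    refine this.trans ?_
    simp
  · push Not at ht
    have hs : 0 ≤ 2 - x^2-y^2 := by linarith
    have hr1 : √(2 - x^2-y^2) ≤ 1 := by exact Real.sqrt_le_iff.2 ⟨zero_le_one, by linarith⟩
    have := key (√(2 - x^2-y^2)) (sqrt_nonneg _) hr1 (fun z hz hr => by
      have := Real.sq_sqrt hs
      nlinarith [hz.1])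
    refine this.trans (ENNReal.ofReal_le_ofReal ?_)
    have h := QQ_ge _ (sqrt_nonneg _) hr1
    rw [Real.sq_sqrt hs] at h
    rw [max_eq_right (by linarith)]
    convert h using 2; ring

lemma L2 (x : ℝ) (hx : x ∈ Icc (0:ℝ) 1) :
    ∫⁻ y in Icc (0:ℝ) 1, ENNReal.ofReal (2*(1-y)) * ENNReal.ofReal (QQ (max 0 (x^2+y^2-1))) ≤
      ENNReal.ofReal (HH (x^2)) := by
  have hx2 : x^2 ≤ 1 := by nlinarith [hx.1, hx.2]
  have hs : 0 ≤ 1 - x^2 := by linarith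
  obtain ⟨r, hr⟩ : ∃ r, r = √(1 - x^2) := ⟨_, rfl⟩
  have hr0 : 0 ≤ r := hr ▸ sqrt_nonneg _
  have hrr : r^2 = 1 - x^2 := by rw [hr]; exact Real.sq_sqrt hs
  have hr1 : r ≤ 1 := by nlinarith
  have hQ : ∀ t, 0 ≤ t → 0 ≤ QQ t := fun t ht => by unfold QQ; positivity
  have e := int_bound r hr1 (fun y => 2*(1-y)*QQ (y^2-r^2))
    (fun y =>
      1/4 * (2*(y^5/5 - 2*r^2*y^3/3 + r^4*y) - 2*(y^2-r^2)^3/6)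
      + 1/8 * (2*(y^7/7 - 3*r^2*y^5/5 + 3*r^4*y^3/3 - r^6*y) - 2*(y^2-r^2)^4/8)
      + 5/64 * (2*(y^9/9 - 4*r^2*y^7/7 + 6*r^4*y^5/5 - 4*r^6*y^3/3 + r^8*y) - 2*(y^2-r^2)^5/10)
      + 35/64 * (2*(y^11/11 - 5*r^2*y^9/9 + 10*r^4*y^7/7 - 10*r^6*y^5/5 + 5*r^8*y^3/3 - r^10*y)
          - 2*(y^2-r^2)^6/12))
    (by unfold QQ; fun_prop)
    (fun y => by
      have h := DifferentiableAt.hasDerivAt (x := y) (𝕜 := ℝ) (f := (fun y : ℝ =>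
      1/4 * (2*(y^5/5 - 2*r^2*y^3/3 + r^4*y) - 2*(y^2-r^2)^3/6)
      + 1/8 * (2*(y^7/7 - 3*r^2*y^5/5 + 3*r^4*y^3/3 - r^6*y) - 2*(y^2-r^2)^4/8)
      + 5/64 * (2*(y^9/9 - 4*r^2*y^7/7 + 6*r^4*y^5/5 - 4*r^6*y^3/3 + r^8*y) - 2*(y^2-r^2)^5/10)
      + 35/64 * (2*(y^11/11 - 5*r^2*y^9/9 + 10*r^4*y^7/7 - 10*r^6*y^5/5 + 5*r^8*y^3/3 - r^10*y)
          - 2*(y^2-r^2)^6/12))) (by fun_prop)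
      refine h.congr_deriv ?_
      simp (disch := fun_prop) [QQ]
      ring)
    (fun y hy => by
      have : 0 ≤ y^2 - r^2 := by nlinarith [hy.1]
      have := hQ _ this
      have : 0 ≤ 1 - y := by linarith [hy.2]
      positivity)
    (fun y => ENNReal.ofReal (2*(1-y)) * ENNReal.ofReal (QQ (max 0 (x^2+y^2-1))))
    (fun y hy hry => by
      have : 0 ≤ 1 - y := by linarith [hy.2]
      rw [← ENNReal.ofReal_mul (by positivity), max_eq_right (by nlinarith)]
      apply le_of_eq; congr 3; linarith)
    (fun y hy hry => by
      have : x^2+y^2-1 ≤ 0 := by nlinarith [hy.1]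
      rw [max_eq_left this]; simp [QQ])
  refine e.trans (ENNReal.ofReal_le_ofReal ?_)
  have hx' : x^2 = 1 - r^2 := by linarith
  rw [hx', ← sub_nonneg]
  have : 0 ≤ (1-r)^6 * (1139/2217600 + 1139/369600*r + 2495/88704*r^2 + 7363/55440*r^3
     + 1013/4224*r^4 + 36881/158400*r^5 + 1019/9600*r^6) := by
    have : 0 ≤ 1 - r := by linarith
    positivity
  refine this.trans (le_of_eq ?_)
  unfold HH; ring

lemma L3 : ∫⁻ x in Icc (0:ℝ) 1, ENNReal.ofReal (2*(1-x)) * ENNReal.ofReal (HH (x^2)) <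
    ENNReal.ofReal 0.0005 := by
  have hH : ∀ t, 0 ≤ t → 0 ≤ HH t := fun t ht => by unfold HH; positivity
  have e := int_bound 0 zero_le_one (fun x => 2*(1-x)*HH (x^2))
    (fun x => 1/96*(2*(x^9/9-x^10/10)) + 1/160*(2*(x^11/11-x^12/12)) + 3/200*(2*(x^13/13-x^14/14)))
    (by unfold HH; fun_prop)
    (fun y => by
      have h := DifferentiableAt.hasDerivAt (x := y) (𝕜 := ℝ) (f := (fun x : ℝ =>
        1/96*(2*(x^9/9-x^10/10)) + 1/160*(2*(x^11/11-x^12/12)) + 3/200*(2*(x^13/13-x^14/14))))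
        (by fun_prop)
      refine h.congr_deriv ?_
      simp (disch := fun_prop) [HH]
      ring)
    (fun y hy => by
      have := hH (y^2) (sq_nonneg _)
      have : 0 ≤ 1 - y := by linarith [hy.2]
      positivity)
    (fun x => ENNReal.ofReal (2*(1-x)) * ENNReal.ofReal (HH (x^2)))
    (fun y hy hry => by
      have : 0 ≤ 1 - y := by linarith [hy.2]
      rw [← ENNReal.ofReal_mul (by positivity)])
    (fun y hy hry => by
      have : y = 0 := le_antisymm hry hy.1
      simp [this, HH])
  refine e.trans_lt ?_
  rw [ENNReal.ofReal_lt_ofReal_iff (by norm_num)]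
  norm_num

open scoped Pointwise in
lemma scale_vol {a : ℝ} (S : Set (EuclideanSpace ℝ (Fin 3) × EuclideanSpace ℝ (Fin 3))) (ha : 0 < a) :
    volume (a • S) = ENNReal.ofReal (a^6) * volume S := by
  have : Measure.IsAddHaarMeasure (volume : Measure (EuclideanSpace ℝ (Fin 3) × EuclideanSpace ℝ (Fin 3))) :=
    inferInstanceAs (Measure.IsAddHaarMeasure (Measure.prod volume volume))
  rw [Measure.addHaar_smul]
  simp [abs_of_pos ha]

lemma phi_mp : MeasurePreserving (fun p : EuclideanSpace ℝ (Fin 3) × EuclideanSpace ℝ (Fin 3) =>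
    (((p.1 0, p.2 0), (p.1 1, p.2 1), (p.1 2, p.2 2)) : (ℝ × ℝ) × (ℝ × ℝ) × (ℝ × ℝ))) volume volume := by
  have h1 : MeasurePreserving (Prod.map (WithLp.ofLp) (WithLp.ofLp) :
      EuclideanSpace ℝ (Fin 3) × EuclideanSpace ℝ (Fin 3) → (Fin 3 → ℝ) × (Fin 3 → ℝ)) volume volume :=
    (PiLp.volume_preserving_ofLp (Fin 3)).prod (PiLp.volume_preserving_ofLp (Fin 3))
  have h2 := (volume_measurePreserving_arrowProdEquivProdArrow ℝ ℝ (Fin 3)).symm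
  have h3 := volume_preserving_piFinSuccAbove (fun _ : Fin 3 => ℝ × ℝ) 0
  have h4 : MeasurePreserving (Prod.map id MeasurableEquiv.finTwoArrow :
    (ℝ×ℝ) × (Fin 2 → ℝ × ℝ) → _) volume volume := (MeasurePreserving.id volume).prod (volume_preserving_finTwoArrow (ℝ × ℝ))
  exact h4.comp (h3.comp (h2.comp h1))

noncomputable def muSq : Measure (ℝ × ℝ) := volume.restrict (Icc (0:ℝ) 1 ×ˢ Icc (0:ℝ) 1)

instance : SFinite muSq := by unfold muSq; infer_instance

lemma K (f : ℝ → ENNReal) (hf : Measurable f) :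
    ∫⁻ p, f |p.1 - p.2| ∂muSq = ∫⁻ d in Icc (0:ℝ) 1, ENNReal.ofReal (2*(1-d)) * f d := by
  have e0 : muSq = (volume.restrict (Icc (0:ℝ) 1)).prod (volume.restrict (Icc (0:ℝ) 1)) := by
    rw [Measure.prod_restrict]; rfl
  have m0 : Measurable ((Icc (0:ℝ) 1).indicator (fun _ => (1:ENNReal))) :=
    measurable_const.indicator measurableSet_Icc
  rw [e0, lintegral_prod _ (by fun_prop)]
  have e1 : ∀ x : ℝ, ∫⁻ y in Icc (0:ℝ) 1, f |x - y| =
      ∫⁻ d, (Icc (0:ℝ) 1).indicator (fun _ => 1) (x + d) * f |d| := by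
    intro x
    rw [← lintegral_indicator measurableSet_Icc, ← lintegral_add_left_eq_self _ x]
    congr with d
    by_cases h : x + d ∈ Icc (0:ℝ) 1
    · simp only [indicator_of_mem h]; simp
    · simp only [indicator_of_notMem h]; simp
  simp only [e1]
  rw [lintegral_lintegral_swap (by
    apply Measurable.aemeasurable
    exact (m0.comp (by fun_prop : Measurable fun z : ℝ × ℝ => z.1 + z.2)).mul (by fun_prop))]
  have e2 : ∀ d : ℝ, ∫⁻ x in Icc (0:ℝ) 1, (Icc (0:ℝ) 1).indicator (fun _ => 1) (x + d) * f |d| =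
      ENNReal.ofReal (1 - |d|) * f |d| := by
    intro d
    have m1 : Measurable (fun x : ℝ => (Icc (0:ℝ) 1).indicator (fun _ => (1:ENNReal)) (x + d)) :=
      m0.comp (by fun_prop : Measurable fun x : ℝ => x + d)
    rw [lintegral_mul_const _ m1]
    congr 1
    have : (fun x : ℝ => (Icc (0:ℝ) 1).indicator (fun _ => (1:ENNReal)) (x + d)) =
       (Icc (-d) (1-d)).indicator 1 := by
      ext x
      by_cases h : x + d ∈ Icc (0:ℝ) 1
      · have h' : x ∈ Icc (-d) (1-d) := ⟨by linarith [h.1], by linarith [h.2]⟩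
        simp only [indicator_of_mem h, indicator_of_mem h']; simp
      · have h' : x ∉ Icc (-d) (1-d) := fun h' => h ⟨by linarith [h'.1], by linarith [h'.2]⟩
        simp only [indicator_of_notMem h, indicator_of_notMem h']
    rw [this, lintegral_indicator_one measurableSet_Icc, Measure.restrict_apply measurableSet_Icc,
      Icc_inter_Icc, Real.volume_Icc]
    congr 1
    rcases le_total 0 d with h | h
    · rw [abs_of_nonneg h, max_eq_right (by linarith), min_eq_left (by linarith)]; ring
    · rw [abs_of_nonpos h, max_eq_left (by linarith), min_eq_right (by linarith)]
  simp only [e2]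
  have e3 : ∫⁻ d in Iic (0:ℝ), ENNReal.ofReal (1 - |d|) * f |d| =
     ∫⁻ d in Ici (0:ℝ), ENNReal.ofReal (1 - |d|) * f |d| := by
    rw [← lintegral_indicator measurableSet_Iic, ← lintegral_indicator measurableSet_Ici,
      ← lintegral_neg_eq_self]
    congr with d
    by_cases h : d ∈ Ici (0:ℝ)
    · have h' : -d ∈ Iic (0:ℝ) := by simpa using h
      simp only [indicator_of_mem h, indicator_of_mem h']; simp
    · have h' : -d ∉ Iic (0:ℝ) := by simpa using h
      simp only [indicator_of_notMem h, indicator_of_notMem h']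
  rw [← lintegral_add_compl _ (measurableSet_Iic (a := (0:ℝ))), e3, compl_Iic,
    restrict_Ioi_eq_restrict_Ici, ← two_mul, ← lintegral_const_mul _ (by fun_prop),
    ← lintegral_indicator measurableSet_Icc, ← lintegral_indicator measurableSet_Ici]
  congr with d
  by_cases h : d ∈ Icc (0:ℝ) 1
  · have h' : d ∈ Ici (0:ℝ) := h.1
    simp only [indicator_of_mem h, indicator_of_mem h']
    rw [abs_of_nonneg h.1, ← mul_assoc, ENNReal.ofReal_mul (by norm_num)]
    simp
  · simp only [indicator_of_notMem h]
    by_cases h' : d ∈ Ici (0:ℝ)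
    · simp only [indicator_of_mem h']
      have h'' : 0 ≤ d := h'
      have : 1 < d := by by_contra h3; exact h ⟨h', not_lt.1 h3⟩
      rw [abs_of_nonneg h'', ENNReal.ofReal_of_nonpos (by linarith)]; simp
    · simp only [indicator_of_notMem h']

lemma abs_mem {p : ℝ × ℝ} (h : p ∈ Icc (0:ℝ) 1 ×ˢ Icc (0:ℝ) 1) : |p.1 - p.2| ∈ Icc (0:ℝ) 1 := by
  obtain ⟨⟨h1, h2⟩, h3, h4⟩ := h
  exact ⟨abs_nonneg _, abs_le.2 ⟨by linarith, by linarith⟩⟩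

lemma prob_bound : (muSq.prod (muSq.prod muSq))
    {t | 2 < (t.1.1 - t.1.2)^2 + (t.2.1.1 - t.2.1.2)^2 + (t.2.2.1 - t.2.2.2)^2} <
    ENNReal.ofReal 0.0005 := by
  have hm : MeasurableSet {t : (ℝ × ℝ) × (ℝ × ℝ) × (ℝ × ℝ) |
      2 < (t.1.1 - t.1.2)^2 + (t.2.1.1 - t.2.1.2)^2 + (t.2.2.1 - t.2.2.2)^2} :=
    measurableSet_lt (by fun_prop) (by fun_prop)
  have mi := (measurable_one (α := ENNReal)).indicator hm
  rw [← lintegral_indicator_one hm, lintegral_prod _ mi.aemeasurable]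
  have hsq : MeasurableSet (Icc (0:ℝ) 1 ×ˢ Icc (0:ℝ) 1) := measurableSet_Icc.prod measurableSet_Icc
  have mQ : Continuous QQ := by unfold QQ; fun_prop
  have mH : Continuous HH := by unfold HH; fun_prop
  have step : ∀ p ∈ Icc (0:ℝ) 1 ×ˢ Icc (0:ℝ) 1,
      ∫⁻ u, ({t : (ℝ × ℝ) × (ℝ × ℝ) × (ℝ × ℝ) |
      2 < (t.1.1 - t.1.2)^2 + (t.2.1.1 - t.2.1.2)^2 + (t.2.2.1 - t.2.2.2)^2}.indicator 1 (p, u) :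
        ENNReal) ∂(muSq.prod muSq) ≤ ENNReal.ofReal (HH (|p.1 - p.2|^2)) := by
    intro p hp
    refine (lintegral_prod _ (mi.comp measurable_prodMk_left).aemeasurable).trans_le ?_
    refine le_trans ?_ (L2 _ (abs_mem hp))
    rw [← K (fun y => ENNReal.ofReal (QQ (max 0 (|p.1-p.2|^2+y^2-1))))
      (ENNReal.measurable_ofReal.comp (mQ.comp (by fun_prop)).measurable)]
    refine setLIntegral_mono' hsq ?_
    intro q hq
    refine le_trans ?_ (L1 _ _ (abs_mem hp) (abs_mem hq))
    rw [← K (fun z => if 2 < |p.1-p.2|^2+|q.1-q.2|^2+z^2 then 1 else 0)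
      (Measurable.ite (measurableSet_lt (by fun_prop) (by fun_prop)) measurable_const
        measurable_const)]
    refine lintegral_mono fun w => le_of_eq ?_
    simp [indicator_apply]
  refine lt_of_le_of_lt ?_ L3
  rw [← K (fun x => ENNReal.ofReal (HH (x^2)))
    (ENNReal.measurable_ofReal.comp (mH.comp (by fun_prop)).measurable)]
  exact setLIntegral_mono' hsq step

lemma unit_case : volume {p : EuclideanSpace ℝ (Fin 3) × EuclideanSpace ℝ (Fin 3) |
        p.1 ∈ cube 1 ∧ p.2 ∈ cube 1 ∧ Real.sqrt 2 < dist p.1 p.2} < ENNReal.ofReal 0.0005 := by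
  have hm : MeasurableSet {t : (ℝ × ℝ) × (ℝ × ℝ) × (ℝ × ℝ) |
      2 < (t.1.1 - t.1.2)^2 + (t.2.1.1 - t.2.1.2)^2 + (t.2.2.1 - t.2.2.2)^2} :=
    measurableSet_lt (by fun_prop) (by fun_prop)
  have hsq : MeasurableSet (Icc (0:ℝ) 1 ×ˢ Icc (0:ℝ) 1) := measurableSet_Icc.prod measurableSet_Icc
  have h := prob_bound
  unfold muSq at h
  rw [Measure.prod_restrict, Measure.prod_restrict, Measure.restrict_apply hm] at h
  have h2 := phi_mp.measure_preimage (hm.inter (hsq.prod (hsq.prod hsq))).nullMeasurableSet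
  refine lt_of_le_of_lt (le_of_eq ?_) (h2.trans_lt h)
  congr 1
  ext p
  have : √2 < dist p.1 p.2 ↔
      2 < (p.1 0 - p.2 0)^2 + (p.1 1 - p.2 1)^2 + (p.1 2 - p.2 2)^2 := by
    rw [EuclideanSpace.dist_eq, Real.sqrt_lt_sqrt_iff (by norm_num)]
    simp [Fin.sum_univ_three, Real.dist_eq, sq_abs]
  simp only [mem_ofPred_eq, this, cube, Fin.forall_fin_succ, mem_preimage, mem_inter_iff, mem_prod]
  simp
  tauto

open scoped Pointwise in
theorem volume_pairs_dist_gt_sqrt_two (a : ℝ) (ha : 0 < a) :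
    volume {p : EuclideanSpace ℝ (Fin 3) × EuclideanSpace ℝ (Fin 3) |
        p.1 ∈ cube a ∧ p.2 ∈ cube a ∧ Real.sqrt 2 * a < dist p.1 p.2} <
      ENNReal.ofReal (0.0005 * a ^ 6) := by
  have e : {p : EuclideanSpace ℝ (Fin 3) × EuclideanSpace ℝ (Fin 3) |
        p.1 ∈ cube a ∧ p.2 ∈ cube a ∧ Real.sqrt 2 * a < dist p.1 p.2} =
      a • {p : EuclideanSpace ℝ (Fin 3) × EuclideanSpace ℝ (Fin 3) |
        p.1 ∈ cube 1 ∧ p.2 ∈ cube 1 ∧ Real.sqrt 2 < dist p.1 p.2} := by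
    have hc : ∀ x : EuclideanSpace ℝ (Fin 3), a⁻¹ • x ∈ cube 1 ↔ x ∈ cube a := by
      intro x
      simp only [cube, mem_ofPred_eq, mem_Icc, PiLp.smul_apply, smul_eq_mul]
      refine forall_congr' fun i => ?_
      rw [inv_mul_le_iff₀ ha, mul_one, mul_nonneg_iff_of_pos_left (inv_pos.2 ha)]
    ext p
    rw [mem_smul_set_iff_inv_smul_mem₀ ha.ne']
    simp only [mem_ofPred_eq, Prod.smul_fst, Prod.smul_snd, hc, dist_smul₀, Real.norm_eq_abs,
      abs_of_pos (inv_pos.2 ha)]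
    rw [lt_inv_mul_iff₀ ha, mul_comm]
  rw [e, scale_vol _ ha, mul_comm (0.0005:ℝ), ENNReal.ofReal_mul (by positivity)]
  exact ENNReal.mul_lt_mul_right (by simpa using pow_pos ha 6) ENNReal.ofReal_ne_top unit_case
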